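/- Let T be a finite tree rooted at r with at least one edge and let p ≥ 2·h(T). There exists an optimal solution 𝓘 of the Min-Distance problem (a feasible covering minimizing the total cost Σ_{I∈𝓘} C(I)) such that the leaf sets of the immersions of 𝓘 form a partition of the set of leaves of T, i.e. every leaf of every immersion I ∈ 𝓘 is a leaf of T and every leaf of T is a leaf of exactly one immersion of 𝓘. -/

import Mathlib

open SimpleGraph Finset

/-- Cost of a subgraph-immersion: twice the number of its edges. -/
noncomputable def immCost {V : Type*} {G : SimpleGraph V} (I : G.Subgraph) : ℕ :=
  2 * I.edgeSet.ncard

/-- An immersion is a connected subgraph of `G` containing the root `r`. -/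
def IsImmersion {V : Type*} {G : SimpleGraph V} (r : V) (I : G.Subgraph) : Prop :=
  I.Connected ∧ r ∈ I.verts

/-- Height of the rooted tree: maximum distance from the root. -/
noncomputable def treeHeight {V : Type*} [Fintype V] (G : SimpleGraph V) (r : V) : ℕ :=
  Finset.univ.sup (fun v => G.dist r v)

/-- A leaf of the rooted tree: a vertex `v ≠ r` of degree 1. -/
def IsTreeLeaf {V : Type*} (G : SimpleGraph V) (r v : V) : Prop :=
  v ≠ r ∧ (G.neighborSet v).ncard = 1

/-- A leaf of an immersion `I`: a vertex `v ≠ r` of degree 1 in `I`. -/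
def IsImmLeaf {V : Type*} {G : SimpleGraph V} (r : V) (I : G.Subgraph) (v : V) : Prop :=
  v ≠ r ∧ (I.neighborSet v).ncard = 1

/-- A feasible covering: a finite set of immersions, each of cost at most `p`,
whose vertex sets cover all vertices. -/
def IsFeasible {V : Type*} [Fintype V] {G : SimpleGraph V} (r : V) (p : ℕ)
    (𝓘 : Finset G.Subgraph) : Prop :=
  (∀ I ∈ 𝓘, IsImmersion r I ∧ immCost I ≤ p) ∧ (∀ v : V, ∃ I ∈ 𝓘, v ∈ I.verts)

/-- Total cost of a set of immersions. -/
noncomputable def totalCost {V : Type*} {G : SimpleGraph V} (𝓘 : Finset G.Subgraph) : ℕ :=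
  ∑ I ∈ 𝓘, immCost I

/-- Optimality for the Min-Distance problem. -/
def MinDistOptimal {V : Type*} [Fintype V] {G : SimpleGraph V} (r : V) (p : ℕ)
    (𝓘 : Finset G.Subgraph) : Prop :=
  IsFeasible r p 𝓘 ∧ ∀ 𝓙 : Finset G.Subgraph, IsFeasible r p 𝓙 → totalCost 𝓘 ≤ totalCost 𝓙

/-- Makespan (maximum collective time) of an assignment `a` of immersions to `k` robots. -/
noncomputable def makespan {V : Type*} {G : SimpleGraph V} (k : ℕ)
    (𝓘 : Finset G.Subgraph) (a : G.Subgraph → Fin k) : ℕ :=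
  Finset.univ.sup (fun i : Fin k => ∑ I ∈ 𝓘.filter (fun I => a I = i), immCost I)

/-- Optimality for the Min-Time problem with `k` robots. -/
def MinTimeOptimal {V : Type*} [Fintype V] {G : SimpleGraph V} (r : V) (p k : ℕ)
    (𝓘 : Finset G.Subgraph) (a : G.Subgraph → Fin k) : Prop :=
  IsFeasible r p 𝓘 ∧ ∀ (𝓙 : Finset G.Subgraph) (b : G.Subgraph → Fin k),
    IsFeasible r p 𝓙 → makespan k 𝓘 a ≤ makespan k 𝓙 b

/-- Optimality for the Min-Immersions problem. -/
def MinImmOptimal {V : Type*} [Fintype V] {G : SimpleGraph V} (r : V) (p : ℕ)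
    (𝓘 : Finset G.Subgraph) : Prop :=
  IsFeasible r p 𝓘 ∧ ∀ 𝓙 : Finset G.Subgraph, IsFeasible r p 𝓙 → 𝓘.card ≤ 𝓙.card

/-!
Every optimal covering has the required property. If a leaf `v` of an immersion `I` also lies in
another immersion of the covering, then pruning `v` from `I` keeps the covering feasible and makes
it cheaper; so in an optimal covering a leaf of `I` lies in no other immersion. A leaf of the tree
is a leaf of every immersion containing it, hence of exactly one. Conversely, suppose a leaf `v` of
`I` had a neighbour `w` in the tree that is not its neighbour in `I`. Connected subgraphs of a tree
are induced, so `w` lies outside `I` and the path from the root to `w` runs through `v`. The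
immersion covering `w` would then be a second one containing `v`.

An optimal covering exists because the shortest paths from the root, each of cost at most `2 h(T)`,
form a feasible covering.
-/

section ConnectedSubgraphs

variable {V : Type*} {G : SimpleGraph V} {H K : G.Subgraph}

theorem exists_isPath_toSubgraph_le (hH : H.Preconnected) {a b : V} (ha : a ∈ H.verts)
    (hb : b ∈ H.verts) : ∃ q : G.Walk a b, q.IsPath ∧ q.toSubgraph ≤ H := by
  classical
  obtain ⟨q, hq⟩ := H.preconnected_iff_forall_exists_walk_subgraph.1 hH ha hb
  exact ⟨q.bypass, q.bypass_isPath, Walk.toSubgraph_bypass_le_toSubgraph.trans hq⟩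

theorem isInduced_of_isAcyclic_of_preconnected (hG : G.IsAcyclic) (hH : H.Preconnected) :
    H.IsInduced := by
  intro a ha b hb hab
  obtain ⟨q, hq, hqH⟩ := exists_isPath_toSubgraph_le hH ha hb
  obtain rfl : q = hab.toWalk :=
    congrArg Subtype.val ((hG.subsingleton_path a b).elim ⟨q, hq⟩ ⟨_, Walk.IsPath.of_adj hab⟩)
  exact hqH.2 (by simp)

theorem mem_verts_or_mem_verts_of_adj (hG : G.IsAcyclic) (hH : H.Preconnected)
    (hK : K.Preconnected) {r v w : V} (hrH : r ∈ H.verts) (hrK : r ∈ K.verts) (hv : v ∈ H.verts)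
    (hw : w ∈ K.verts) (hvw : G.Adj v w) : v ∈ K.verts ∨ w ∈ H.verts := by
  obtain ⟨q, hq, hqH⟩ := exists_isPath_toSubgraph_le hH hrH hv
  obtain ⟨s, hs, hsK⟩ := exists_isPath_toSubgraph_le hK hrK hw
  by_cases hvs : v ∈ s.support
  · exact .inl (hsK.1 (s.mem_verts_toSubgraph.2 hvs))
  · have hwq := hG.mem_support_of_ne_mem_support_of_adj_of_isPath hq hs hvw hvs
    exact .inr (hqH.1 (q.mem_verts_toSubgraph.2 hwq))

theorem preconnected_deleteVerts_of_subsingleton_neighborSet (hH : H.Preconnected) {s : Set V}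
    (hs : ∀ v ∈ s, (H.neighborSet v).Subsingleton) : (H.deleteVerts s).Preconnected := by
  have hleaf : ∀ x ∉ {x : H.verts | x.1 ∉ s}, (H.coe.neighborSet x).Subsingleton :=
    fun x hx y hy z hz ↦ Subtype.ext (hs x (not_not.1 hx) hy hz)
  let f : H.coe.induce {x | x.1 ∉ s} →g (H.deleteVerts s).coe :=
    { toFun := fun x ↦ ⟨x.1, x.1.2, x.2⟩
      map_rel' := fun {x y} hxy ↦ Subgraph.deleteVerts_adj.2 ⟨x.1.2, x.2, y.1.2, y.2, hxy⟩ }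
  have hf : Function.Surjective f := fun x ↦ ⟨⟨⟨x.1, x.2.1⟩, x.2.2⟩, rfl⟩
  exact ⟨(hH.coe.induce_of_degree_eq_one hleaf).map f hf⟩

theorem edgeSet_deleteVerts_ssubset {v w : V} (hvw : H.Adj v w) {s : Set V} (hv : v ∈ s) :
    (H.deleteVerts s).edgeSet ⊂ H.edgeSet := by
  refine (Set.ssubset_iff_of_subset (Subgraph.edgeSet_mono Subgraph.deleteVerts_le)).2
    ⟨s(v, w), hvw, fun h ↦ ?_⟩
  exact (Subgraph.deleteVerts_adj.1 h).2.1 hv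

end ConnectedSubgraphs

section Immersions

variable {V : Type*} {G : SimpleGraph V} {r v : V} {I : G.Subgraph}

theorem IsImmLeaf.exists_adj (hv : IsImmLeaf r I v) : ∃ u, I.Adj v u :=
  Set.nonempty_of_ncard_ne_zero (hv.2.trans_ne one_ne_zero)

theorem IsImmLeaf.mem_verts (hv : IsImmLeaf r I v) : v ∈ I.verts :=
  hv.exists_adj.elim fun _ hu ↦ I.edge_vert hu

theorem IsImmersion.deleteVerts_of_isImmLeaf (hI : IsImmersion r I) (hv : IsImmLeaf r I v) :
    IsImmersion r (I.deleteVerts {v}) := by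
  have hr : r ∈ (I.deleteVerts {v}).verts := ⟨hI.2, hv.1.symm⟩
  have hsub : (I.neighborSet v).Subsingleton := by
    obtain ⟨u, hu⟩ := Set.ncard_eq_one.1 hv.2
    exact hu ▸ Set.subsingleton_singleton
  refine ⟨Subgraph.connected_iff.2 ⟨?_, r, hr⟩, hr⟩
  exact preconnected_deleteVerts_of_subsingleton_neighborSet hI.1.preconnected
    fun _ hx ↦ hx ▸ hsub

theorem IsTreeLeaf.isImmLeaf (hv : IsTreeLeaf G r v) (hI : IsImmersion r I) (hvI : v ∈ I.verts) :
    IsImmLeaf r I v := by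
  have : Nontrivial I.verts := ⟨⟨v, hvI⟩, ⟨r, hI.2⟩, Subtype.coe_ne_coe.1 hv.1⟩
  obtain ⟨w, hw⟩ := hI.1.preconnected.exists_adj_of_nontrivial ⟨v, hvI⟩
  obtain ⟨u, hu⟩ := Set.ncard_eq_one.1 hv.2
  have hIu : I.neighborSet v = {u} :=
    (Set.Nonempty.subset_singleton_iff ⟨w, hw⟩).1 (hu ▸ I.neighborSet_subset v)
  exact ⟨hv.1, Set.ncard_eq_one.2 ⟨u, hIu⟩⟩

theorem immCost_toSubgraph_le {a b : V} (q : G.Walk a b) : immCost q.toSubgraph ≤ 2 * q.length := by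
  classical
  have hedges : q.toSubgraph.edgeSet = q.edges.toFinset := by
    rw [q.edgeSet_toSubgraph, List.coe_toFinset, Walk.edgeSet]
  rw [immCost, hedges, Set.ncard_coe_finset, ← q.length_edges]
  exact Nat.mul_le_mul_left 2 q.edges.toFinset_card_le

theorem immCost_lt_of_edgeSet_ssubset {J : G.Subgraph} (hI : I.edgeSet.Finite)
    (h : J.edgeSet ⊂ I.edgeSet) : immCost J < immCost I :=
  Nat.mul_lt_mul_of_pos_left (Set.ncard_lt_ncard h hI) two_pos

theorem totalCost_insert_le [DecidableEq G.Subgraph] (𝓘 : Finset G.Subgraph) :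
    totalCost (insert I 𝓘) ≤ immCost I + totalCost 𝓘 := by
  by_cases hI : I ∈ 𝓘
  · rw [Finset.insert_eq_of_mem hI]
    exact Nat.le_add_left _ _
  · exact (Finset.sum_insert hI).le

end Immersions

section Coverings

variable {V : Type*} [Fintype V] {G : SimpleGraph V} {r v : V} {p : ℕ} {𝓘 : Finset G.Subgraph}
  {I J : G.Subgraph}

theorem exists_isFeasible (hG : G.Connected) (hp : 2 * treeHeight G r ≤ p) :
    ∃ 𝓘 : Finset G.Subgraph, IsFeasible r p 𝓘 := by
  classical
  choose q hq using hG.exists_walk_length_eq_dist r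
  have hcost (v : V) : immCost (q v).toSubgraph ≤ p :=
    calc
      immCost (q v).toSubgraph ≤ 2 * G.dist r v := hq v ▸ immCost_toSubgraph_le (q v)
      _ ≤ 2 * treeHeight G r :=
        Nat.mul_le_mul_left 2 (Finset.le_sup (f := fun v ↦ G.dist r v) (Finset.mem_univ v))
      _ ≤ p := hp
  refine ⟨Finset.univ.image fun v ↦ (q v).toSubgraph, Finset.forall_mem_image.2 fun v _ ↦ ?_,
    fun v ↦ ⟨_, Finset.mem_image_of_mem _ (Finset.mem_univ v), (q v).end_mem_verts_toSubgraph⟩⟩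
  exact ⟨⟨(q v).toSubgraph_connected, (q v).start_mem_verts_toSubgraph⟩, hcost v⟩

theorem IsFeasible.exists_minDistOptimal (h𝓘 : IsFeasible r p 𝓘) :
    ∃ 𝓙 : Finset G.Subgraph, MinDistOptimal r p 𝓙 := by
  obtain ⟨𝓙, h𝓙, hmin⟩ := exists_minimalFor_of_wellFoundedLT (IsFeasible r p) totalCost ⟨𝓘, h𝓘⟩
  exact ⟨𝓙, h𝓙, fun 𝓚 h𝓚 ↦ (le_total _ _).elim id (hmin h𝓚)⟩

theorem IsFeasible.insert_erase [DecidableEq G.Subgraph] (h𝓘 : IsFeasible r p 𝓘)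
    (hJ : IsImmersion r J) (hJp : immCost J ≤ p)
    (hcover : ∀ x ∈ I.verts, x ∈ J.verts ∨ ∃ K ∈ 𝓘, K ≠ I ∧ x ∈ K.verts) :
    IsFeasible r p (insert J (𝓘.erase I)) := by
  have of_ne {K : G.Subgraph} {x : V} (hK : K ∈ 𝓘) (hKI : K ≠ I) (hx : x ∈ K.verts) :
      ∃ K ∈ insert J (𝓘.erase I), x ∈ K.verts :=
    ⟨K, Finset.mem_insert_of_mem (Finset.mem_erase.2 ⟨hKI, hK⟩), hx⟩
  refine ⟨(Finset.forall_mem_insert ..).2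
    ⟨⟨hJ, hJp⟩, fun K hK ↦ h𝓘.1 K (Finset.mem_of_mem_erase hK)⟩, fun x ↦ ?_⟩
  obtain ⟨K, hK, hxK⟩ := h𝓘.2 x
  rcases eq_or_ne K I with rfl | hKI
  · rcases hcover x hxK with hxJ | ⟨L, hL, hLK, hxL⟩
    · exact ⟨J, Finset.mem_insert_self .., hxJ⟩
    · exact of_ne hL hLK hxL
  · exact of_ne hK hKI hxK

theorem MinDistOptimal.immCost_le (h𝓘 : MinDistOptimal r p 𝓘) (hI : I ∈ 𝓘) (hJ : IsImmersion r J)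
    (hcover : ∀ x ∈ I.verts, x ∈ J.verts ∨ ∃ K ∈ 𝓘, K ≠ I ∧ x ∈ K.verts) :
    immCost I ≤ immCost J := by
  classical
  by_contra! hlt
  have hfeas := h𝓘.1.insert_erase hJ (hlt.le.trans (h𝓘.1.1 I hI).2) hcover
  have hle : immCost I + totalCost (𝓘.erase I) ≤ immCost J + totalCost (𝓘.erase I) :=
    calc
      immCost I + totalCost (𝓘.erase I) = totalCost 𝓘 := Finset.add_sum_erase 𝓘 immCost hI
      _ ≤ totalCost (insert J (𝓘.erase I)) := h𝓘.2 _ hfeas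
      _ ≤ immCost J + totalCost (𝓘.erase I) := totalCost_insert_le _
  exact hlt.not_ge (Nat.le_of_add_le_add_right hle)

theorem MinDistOptimal.eq_of_isImmLeaf_of_mem_verts (h𝓘 : MinDistOptimal r p 𝓘) (hI : I ∈ 𝓘)
    (hJ : J ∈ 𝓘) (hv : IsImmLeaf r I v) (hvJ : v ∈ J.verts) : I = J := by
  by_contra hIJ
  have hcover : ∀ x ∈ I.verts, x ∈ (I.deleteVerts {v}).verts ∨ ∃ K ∈ 𝓘, K ≠ I ∧ x ∈ K.verts := by
    intro x hx
    rcases eq_or_ne x v with rfl | hxv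
    · exact .inr ⟨J, hJ, Ne.symm hIJ, hvJ⟩
    · exact .inl ⟨hx, hxv⟩
  obtain ⟨u, hvu⟩ := hv.exists_adj
  have hlt : immCost (I.deleteVerts {v}) < immCost I :=
    immCost_lt_of_edgeSet_ssubset (Set.toFinite _)
      (edgeSet_deleteVerts_ssubset hvu (Set.mem_singleton v))
  exact hlt.not_ge (h𝓘.immCost_le hI ((h𝓘.1.1 I hI).1.deleteVerts_of_isImmLeaf hv) hcover)

theorem MinDistOptimal.isTreeLeaf_of_isImmLeaf (hG : G.IsAcyclic) (h𝓘 : MinDistOptimal r p 𝓘)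
    (hI : I ∈ 𝓘) (hv : IsImmLeaf r I v) : IsTreeLeaf G r v := by
  have hImm := (h𝓘.1.1 I hI).1
  suffices hsub : G.neighborSet v ⊆ I.neighborSet v from
    ⟨hv.1, hsub.antisymm (I.neighborSet_subset v) ▸ hv.2⟩
  intro w hvw
  suffices hwI : w ∈ I.verts from
    isInduced_of_isAcyclic_of_preconnected hG hImm.1.preconnected hv.mem_verts hwI hvw
  obtain ⟨J, hJ, hwJ⟩ := h𝓘.1.2 w
  have hJmm := (h𝓘.1.1 J hJ).1
  rcases mem_verts_or_mem_verts_of_adj hG hImm.1.preconnected hJmm.1.preconnected hImm.2 hJmm.2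
    hv.mem_verts hwJ hvw with hvJ | hwI
  · exact h𝓘.eq_of_isImmLeaf_of_mem_verts hI hJ hv hvJ ▸ hwJ
  · exact hwI

theorem MinDistOptimal.existsUnique_isImmLeaf (h𝓘 : MinDistOptimal r p 𝓘)
    (hv : IsTreeLeaf G r v) : ∃! I : G.Subgraph, I ∈ 𝓘 ∧ IsImmLeaf r I v := by
  obtain ⟨I, hI, hvI⟩ := h𝓘.1.2 v
  refine ⟨I, ⟨hI, hv.isImmLeaf (h𝓘.1.1 I hI).1 hvI⟩, fun J ⟨hJ, hvJ⟩ ↦ ?_⟩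
  exact h𝓘.eq_of_isImmLeaf_of_mem_verts hJ hI hvJ hvI

end Coverings

theorem stmt_6 {V : Type*} [Fintype V] (T : SimpleGraph V) (r : V) (p : ℕ)
    (hT : T.IsTree) (hE : T.edgeSet.Nonempty) (hp : 2 * treeHeight T r ≤ p) :
    ∃ 𝓘 : Finset T.Subgraph, MinDistOptimal r p 𝓘 ∧
      (∀ I ∈ 𝓘, ∀ v : V, IsImmLeaf r I v → IsTreeLeaf T r v) ∧
      (∀ l : V, IsTreeLeaf T r l → ∃! I : T.Subgraph, I ∈ 𝓘 ∧ IsImmLeaf r I l) := by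
  obtain ⟨_, hfeasible⟩ := exists_isFeasible hT.connected hp
  obtain ⟨𝓘, h𝓘⟩ := hfeasible.exists_minDistOptimal
  exact ⟨𝓘, h𝓘, fun I hI v hv ↦ h𝓘.isTreeLeaf_of_isImmLeaf hT.isAcyclic hI hv,
    fun l hl ↦ h𝓘.existsUnique_isImmLeaf hl⟩
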